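/- In the noetherian reduction of a smooth homomorphism A → B, the subring A₀ ⊆ A can be chosen so that A₀ → A is injective, and then the induced homomorphism B₀ → B is also injective. -/

import Mathlib

universe u
open TensorProduct

theorem stmt_6 {A B : Type u} [CommRing A] [CommRing B] [Algebra A B]
    [Algebra.FormallySmooth A B] [Algebra.FinitePresentation A B] :
    ∃ (A₀ B₀ : Type) (_ : CommRing A₀) (_ : CommRing B₀) (_ : Algebra A₀ B₀)
      (_ : Algebra A₀ A),
      IsNoetherianRing A₀ ∧ IsNoetherianRing B₀ ∧
      Algebra.FormallySmooth A₀ B₀ ∧ Algebra.FinitePresentation A₀ B₀ ∧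
      Function.Injective (algebraMap A₀ A) ∧
      ∃ e : (A ⊗[A₀] B₀) ≃ₐ[A] B,
        Function.Injective (fun b₀ : B₀ => e ((1 : A) ⊗ₜ[A₀] b₀)) := by
  have : Algebra.Smooth A B := ⟨inferInstance, inferInstance⟩
  obtain ⟨A₁, B₁, _, _, _, _, _, hinj, _, _, ⟨e₁⟩⟩ := Algebra.Smooth.exists_finiteType ℤ A B
  have : Small.{0} A₁ := Algebra.FiniteType.small (R := ℤ)
  have : Small.{0} B₁ := Algebra.FiniteType.small (R := A₁)
  have : IsNoetherianRing A₁ := Algebra.FiniteType.isNoetherianRing ℤ A₁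
  let f : Shrink.{0} A₁ ≃+* A₁ := Shrink.ringEquiv A₁
  let : Algebra (Shrink.{0} A₁) A₁ := f.toRingHom.toAlgebra
  let : Algebra (Shrink.{0} A₁) A := ((algebraMap A₁ A).comp f.toRingHom).toAlgebra
  let : Algebra (Shrink.{0} A₁) B₁ := ((algebraMap A₁ B₁).comp f.toRingHom).toAlgebra
  have : IsScalarTower (Shrink.{0} A₁) A₁ A := .of_algebraMap_eq fun _ ↦ rfl
  have : IsScalarTower (Shrink.{0} A₁) A₁ B₁ := .of_algebraMap_eq fun _ ↦ rfl
  have : IsNoetherianRing (Shrink.{0} A₁) := isNoetherianRing_of_ringEquiv A₁ f.symm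
  have : Algebra.Smooth (Shrink.{0} A₁) A₁ :=
    .of_equiv (AlgEquiv.ofBijective (Algebra.ofId (Shrink.{0} A₁) A₁) f.bijective)
  have : Algebra.Smooth (Shrink.{0} A₁) B₁ := .comp (Shrink.{0} A₁) A₁ B₁
  let g : Shrink.{0} B₁ ≃ₐ[Shrink.{0} A₁] B₁ := Shrink.algEquiv _ B₁
  have : Algebra.Smooth (Shrink.{0} A₁) (Shrink.{0} B₁) := .of_equiv g.symm
  have hinj' : Function.Injective (algebraMap (Shrink.{0} A₁) A) := hinj.comp f.injective
  have : TensorProduct.CompatibleSMul (Shrink.{0} A₁) A₁ A B₁ :=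
    .of_algebraMap_surjective _ _ f.surjective
  exact ⟨Shrink.{0} A₁, Shrink.{0} B₁, inferInstance, inferInstance, inferInstance,
    inferInstance, inferInstance,
    Algebra.FiniteType.isNoetherianRing (Shrink.{0} A₁) _, inferInstance, inferInstance, hinj',
    (Algebra.TensorProduct.congr .refl g).trans
      ((Algebra.TensorProduct.equivOfCompatibleSMul (Shrink.{0} A₁) A₁ A A B₁).symm.trans
        e₁.symm),
    (AlgEquiv.injective _).comp (Algebra.TensorProduct.includeRight_injective hinj')⟩
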